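/- Let f_{0,ε} and f_1 satisfy hypotheses H1, H3 and H4. Let {u_ε}, {v_ε} ⊂ L^p(Ω;ℝ^N) be bounded sequences such that u_ε − v_ε → 0 in measure and {v_ε} is p-equiintegrable. Then liminf_{ε→0} ∫_{Ω_{0,ε}} [f_{0,ε}(u_ε) − f_{0,ε}(v_ε)] dx ≥ 0 and liminf_{ε→0} ∫_{Ω_{1,ε}} [f_1(x/ε, u_ε) − f_1(x/ε, v_ε)] dx ≥ 0. -/

import Mathlib

open MeasureTheory Filter Topology Metric Set
open scoped ENNReal NNReal

noncomputable section

attribute [local instance] Classical.propDecidable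

namespace HC

abbrev Rd (d : ℕ) := Fin d → ℝ
abbrev Vec (N : ℕ) := Fin N → ℝ

/-- Euclidean inner product on `ℝ^N`. -/
def dot {N : ℕ} (u v : Vec N) : ℝ := ∑ j, u j * v j

/-- Euclidean norm on `ℝ^N`. -/
def eN {N : ℕ} (ξ : Vec N) : ℝ := Real.sqrt (∑ j, ξ j ^ 2)

/-- The open unit cube `Q = (0,1)^d`. -/
def Qcube (d : ℕ) : Set (Rd d) := {x | ∀ i, x i ∈ Set.Ioo (0 : ℝ) 1}

/-- Translation by an integer vector. -/
def tr {d : ℕ} (z : Fin d → ℤ) (x : Rd d) : Rd d := fun i => x i + (z i : ℝ)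

/-- The cell `ε (S + z)`. -/
def cell {d : ℕ} (ε : ℝ) (z : Fin d → ℤ) (S : Set (Rd d)) : Set (Rd d) :=
  (fun y : Rd d => fun i => ε * (y i + (z i : ℝ))) '' S

/-- The union of the soft inclusions `Ω_{0,ε}`. -/
def softPart {d : ℕ} (ε : ℝ) (Ω D0 : Set (Rd d)) : Set (Rd d) :=
  ⋃ z ∈ {z : Fin d → ℤ | cell ε z D0 ⊆ Ω}, cell ε z D0

/-- The stiff matrix `Ω_{1,ε}`. -/
def stiffPart {d : ℕ} (ε : ℝ) (Ω D0 : Set (Rd d)) : Set (Rd d) := Ω \ softPart ε Ω D0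

/-- `Ω̂_ε`, the union of the ε-cubes contained in `Ω`. -/
def hatOmega {d : ℕ} (ε : ℝ) (Ω : Set (Rd d)) : Set (Rd d) :=
  ⋃ z ∈ {z : Fin d → ℤ | cell ε z (Qcube d) ⊆ Ω}, cell ε z (Qcube d)

/-- `Q`-periodicity of a map defined on `ℝ^d`. -/
def Zper {d : ℕ} {α : Type*} (u : Rd d → α) : Prop :=
  ∀ (x : Rd d) (z : Fin d → ℤ), u (tr z x) = u x

/-- A local Lipschitz-graph description of `Ω` near the point `x`:  after an orthogonal
change of coordinates, `Ω` is locally the epigraph of a Lipschitz function. -/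
def LipschitzGraphAt {d : ℕ} (Ω : Set (Rd d)) (x : Rd d) : Prop :=
  ∃ (L : Rd d ≃ₗ[ℝ] Rd d) (i : Fin d) (φ : Rd d → ℝ) (K : ℝ≥0) (r : ℝ),
    0 < r ∧ (∀ y z : Rd d, dot (L y) (L z) = dot y z) ∧ LipschitzWith K φ ∧
    (∀ y t, φ (Function.update y i t) = φ y) ∧
    (∀ y ∈ Metric.ball x r, (y ∈ Ω ↔ φ (L y) < L y i))

/-- `Ω` has Lipschitz boundary. -/
def HasLipschitzBoundary {d : ℕ} (Ω : Set (Rd d)) : Prop :=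
  ∀ x ∈ frontier Ω, LipschitzGraphAt Ω x

/-- Compact containment `Ω' ⋐ Ω`. -/
def CpctIn {d : ℕ} (Ω' Ω : Set (Rd d)) : Prop :=
  IsOpen Ω' ∧ IsCompact (closure Ω') ∧ closure Ω' ⊆ Ω

/-- The standing geometric assumptions: `d ≥ 2`, `Ω` bounded connected open Lipschitz,
`D₀ ⋐ Q` open connected Lipschitz. -/
def GoodSetting (d : ℕ) (Ω D0 : Set (Rd d)) : Prop :=
  2 ≤ d ∧ IsOpen Ω ∧ IsConnected Ω ∧ Bornology.IsBounded Ω ∧ HasLipschitzBoundary Ω ∧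
    IsOpen D0 ∧ IsConnected D0 ∧ HasLipschitzBoundary D0 ∧
    IsCompact (closure D0) ∧ closure D0 ⊆ Qcube d

/-! ## First-order constant-coefficient operators -/

/-- The pointwise value of the formal adjoint:
`(𝒜*ψ)(x) = - ∑ i (A^{(i)})^T ∂ψ/∂x_i (x)`. -/
def adjApply {d N M : ℕ} (A : Fin d → (Vec N →ₗ[ℝ] Vec M)) (ψ : Rd d → Vec M)
    (x : Rd d) : Vec N :=
  fun n => -∑ i, dot (A i (Pi.single n 1)) (fderiv ℝ ψ x (Pi.single i 1))

/-- Smooth test functions compactly supported in `O`. -/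
def TestOn {d M : ℕ} (O : Set (Rd d)) (ψ : Rd d → Vec M) : Prop :=
  ContDiff ℝ (⊤ : ℕ∞) ψ ∧ HasCompactSupport ψ ∧ tsupport ψ ⊆ O

/-- `𝒜 u = 0` in `W^{-1,p}(O)`, i.e. distributionally on `O`. -/
def AFreeOn {d N M : ℕ} (A : Fin d → (Vec N →ₗ[ℝ] Vec M)) (O : Set (Rd d))
    (u : Rd d → Vec N) : Prop :=
  ∀ ψ : Rd d → Vec M, TestOn O ψ → ∫ x in O, dot (u x) (adjApply A ψ x) = 0

/-- `𝒜 u = 0` on the torus `𝕋^d` (with `Q`-periodic test functions). -/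
def AFreeTorus {d N M : ℕ} (A : Fin d → (Vec N →ₗ[ℝ] Vec M)) (u : Rd d → Vec N) : Prop :=
  ∀ ψ : Rd d → Vec M, ContDiff ℝ (⊤ : ℕ∞) ψ → Zper ψ →
    ∫ x in Qcube d, dot (u x) (adjApply A ψ x) = 0

/-- The symbol `𝔸[ω] = ∑ i ω_i A^{(i)}`. -/
def symb {d N M : ℕ} (A : Fin d → (Vec N →ₗ[ℝ] Vec M)) (ω : Rd d) : Vec N →ₗ[ℝ] Vec M :=
  ∑ i, ω i • A i

/-- Murat's constant rank condition. -/
def ConstantRank {d N M : ℕ} (A : Fin d → (Vec N →ₗ[ℝ] Vec M)) : Prop :=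
  ∃ r : ℕ, ∀ ω : Rd d, ω ≠ 0 → Module.finrank ℝ (LinearMap.range (symb A ω)) = r

/-! ## Lp spaces and convergences -/

def MemLpOn {d N : ℕ} (p : ℝ) (O : Set (Rd d)) (u : Rd d → Vec N) : Prop :=
  MemLp u (ENNReal.ofReal p) (volume.restrict O)

def LpNormOn {d N : ℕ} (p : ℝ) (O : Set (Rd d)) (u : Rd d → Vec N) : ℝ :=
  (eLpNorm (fun x => eN (u x)) (ENNReal.ofReal p) (volume.restrict O)).toReal

/-- The conjugate exponent `p' = p/(p-1)`. -/
def conjExp (p : ℝ) : ℝ := p / (p - 1)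

/-- Weak convergence in `L^p(O; ℝ^N)` of a family along a filter. -/
def WeakLpTendsto {d N : ℕ} (p : ℝ) (O : Set (Rd d)) {ι : Type*} (l : Filter ι)
    (u : ι → Rd d → Vec N) (v : Rd d → Vec N) : Prop :=
  ∀ g : Rd d → Vec N, MemLpOn (conjExp p) O g →
    Tendsto (fun k => ∫ x in O, dot (u k x) (g x)) l (𝓝 (∫ x in O, dot (v x) (g x)))

/-- `p`-equiintegrability of a family in `L^p(O)`. -/
def PEquiintegrable {d N : ℕ} (p : ℝ) (O : Set (Rd d)) {ι : Type*}
    (u : ι → Rd d → Vec N) : Prop :=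
  ∀ η : ℝ, 0 < η → ∃ m : ℝ, 0 < m ∧ ∀ (k : ι) (E : Set (Rd d)), MeasurableSet E → E ⊆ O →
    volume E < ENNReal.ofReal m → ∫ x in E, eN (u k x) ^ p < η

/-- Membership in `L^p(Ω × Q; ℝ^N)`. -/
def MemLpProd {d N : ℕ} (p : ℝ) (Ω : Set (Rd d)) (v : Rd d → Rd d → Vec N) : Prop :=
  MemLp (fun q : Rd d × Rd d => v q.1 q.2) (ENNReal.ofReal p)
    ((volume.restrict Ω).prod (volume.restrict (Qcube d)))

def LpNormProd {d N : ℕ} (p : ℝ) (Ω : Set (Rd d)) (v : Rd d → Rd d → Vec N) : ℝ :=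
  (eLpNorm (fun q : Rd d × Rd d => eN (v q.1 q.2)) (ENNReal.ofReal p)
    ((volume.restrict Ω).prod (volume.restrict (Qcube d)))).toReal

/-- `p`-equiintegrability of a family in `L^p(Ω × Q)`. -/
def PEquiintegrableProd {d N : ℕ} (p : ℝ) (Ω : Set (Rd d)) {ι : Type*}
    (w : ι → Rd d → Rd d → Vec N) : Prop :=
  ∀ η : ℝ, 0 < η → ∃ m : ℝ, 0 < m ∧ ∀ (k : ι) (E : Set (Rd d × Rd d)), MeasurableSet E →
    ((volume.restrict Ω).prod (volume.restrict (Qcube d))) E < ENNReal.ofReal m →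
    ∫ q in E, eN (w k q.1 q.2) ^ p
        ∂((volume.restrict Ω).prod (volume.restrict (Qcube d))) < η

/-! ## Two-scale convergence and unfolding -/

/-- `x ↦ sup_{y ∈ Q̄} |g(x,y)|`. -/
def perSup {d N : ℕ} (g : Rd d → Rd d → Vec N) (x : Rd d) : ℝ :=
  sSup ((fun y => eN (g x y)) '' closure (Qcube d))

/-- Test functions for two-scale convergence: elements of `L^{p'}(Ω; C_per(ℝ^d;ℝ^N))`. -/
def TwoScaleTest {d N : ℕ} (p : ℝ) (Ω : Set (Rd d)) (g : Rd d → Rd d → Vec N) : Prop :=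
  (∀ x, Continuous (g x)) ∧ (∀ x, Zper (g x)) ∧
    MemLp (perSup g) (ENNReal.ofReal (conjExp p)) (volume.restrict Ω)

/-- Weak two-scale convergence in `L^p`, along a filter `l` with scales `η`. -/
def WeakTwoScale {d N : ℕ} (p : ℝ) (Ω : Set (Rd d)) {ι : Type*} (l : Filter ι) (η : ι → ℝ)
    (u : ι → Rd d → Vec N) (v : Rd d → Rd d → Vec N) : Prop :=
  ∀ g : Rd d → Rd d → Vec N, TwoScaleTest p Ω g →
    Tendsto (fun k => ∫ x in Ω, dot (u k x) (g x ((η k)⁻¹ • x))) l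
      (𝓝 (∫ x in Ω, ∫ y in Qcube d, dot (v x y) (g x y)))

/-- Strong two-scale convergence in `L^p`. -/
def StrongTwoScale {d N : ℕ} (p : ℝ) (Ω : Set (Rd d)) {ι : Type*} (l : Filter ι) (η : ι → ℝ)
    (u : ι → Rd d → Vec N) (v : Rd d → Rd d → Vec N) : Prop :=
  WeakTwoScale p Ω l η u v ∧ Tendsto (fun k => LpNormOn p Ω (u k)) l (𝓝 (LpNormProd p Ω v))

/-- The unfolding operator `S_ε v (x,y) = ṽ(ε⌊x/ε⌋ + εy)`, where `ṽ` is the extension of `v`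
by `0` outside `Ω`. -/
def unfold {d N : ℕ} (ε : ℝ) (Ω : Set (Rd d)) (v : Rd d → Vec N) :
    Rd d → Rd d → Vec N :=
  fun x y => Set.indicator Ω v (fun i => ε * ((⌊x i / ε⌋ : ℝ) + y i))

/-! ## The energy densities and their hypotheses -/

def H1soft {N : ℕ} (f0 : ℝ → Vec N → ℝ) : Prop := ∀ ε : ℝ, 0 < ε → Continuous (f0 ε)

def H1stiff {d N : ℕ} (f1 : Rd d → Vec N → ℝ) : Prop :=
  (∀ ξ, Measurable fun x => f1 x ξ) ∧ ∀ x, Continuous (f1 x)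

def H2 {d N : ℕ} (f1 : Rd d → Vec N → ℝ) : Prop :=
  ∀ (x : Rd d) (z : Fin d → ℤ) (ξ : Vec N), f1 (tr z x) ξ = f1 x ξ

def H3soft {N : ℕ} (p a lam Lam : ℝ) (f0 : ℝ → Vec N → ℝ) : Prop :=
  0 < a ∧ 0 < lam ∧ 0 < Lam ∧
    ∀ ε : ℝ, 0 < ε → ∀ ξ, lam * (-a + eN ξ ^ p) ≤ f0 ε ξ ∧ f0 ε ξ ≤ Lam * (1 + eN ξ ^ p)

def H3stiff {d N : ℕ} (p a lam Lam : ℝ) (f1 : Rd d → Vec N → ℝ) : Prop :=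
  0 < a ∧ 0 < lam ∧ 0 < Lam ∧
    ∀ (x : Rd d) (ξ : Vec N), lam * (-a + eN ξ ^ p) ≤ f1 x ξ ∧ f1 x ξ ≤ Lam * (1 + eN ξ ^ p)

def H4soft {N : ℕ} (p mu : ℝ) (f0 : ℝ → Vec N → ℝ) : Prop :=
  0 < mu ∧ ∀ ε : ℝ, 0 < ε → ∀ ξ ζ : Vec N,
    |f0 ε ξ - f0 ε ζ| ≤ mu * (1 + eN ξ ^ (p - 1) + eN ζ ^ (p - 1)) * eN (ξ - ζ)

def H4stiff {d N : ℕ} (p mu : ℝ) (f1 : Rd d → Vec N → ℝ) : Prop :=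
  0 < mu ∧ ∀ (x : Rd d) (ξ ζ : Vec N),
    |f1 x ξ - f1 x ζ| ≤ mu * (1 + eN ξ ^ (p - 1) + eN ζ ^ (p - 1)) * eN (ξ - ζ)

def H5 {N : ℕ} (f0 : ℝ → Vec N → ℝ) (f0lim : Vec N → ℝ) : Prop :=
  ∀ ξ, Tendsto (fun ε => f0 ε ξ) (𝓝[>] (0 : ℝ)) (𝓝 (f0lim ξ))

/-! ## The admissible class: Assumptions 1 and 2 -/

/-- Assumption 1 (null average). -/
def NullAverage {d N M : ℕ} (p : ℝ) (A : Fin d → (Vec N →ₗ[ℝ] Vec M))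
    (D0 : Set (Rd d)) : Prop :=
  ∀ u : Rd d → Vec N, MemLp u (ENNReal.ofReal p) (volume.restrict (Qcube d)) → Zper u →
    (∀ᵐ y ∂volume.restrict (Qcube d \ D0), u y = 0) → AFreeTorus A u →
    (∫ y in Qcube d, u y) = 0

/-- Assumption 2 (`𝒜`-free extension operators on the perforated domains). -/
def ExtensionProperty {d N M : ℕ} (p : ℝ) (A : Fin d → (Vec N →ₗ[ℝ] Vec M))
    (Ω D0 : Set (Rd d)) (c : ℝ) (E : ℝ → (Rd d → Vec N) → (Rd d → Vec N)) : Prop :=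
  0 < c ∧
  (∀ ε : ℝ, 0 < ε → ∀ u : Rd d → Vec N, MemLpOn p Ω u → AFreeOn A Ω u →
    (∀ᵐ x ∂volume.restrict (stiffPart ε Ω D0), E ε u x = u x) ∧
    MemLpOn p Ω (E ε u) ∧
    LpNormOn p Ω (E ε u) ≤ c * LpNormOn p (stiffPart ε Ω D0) u ∧
    AFreeOn A Ω (E ε u)) ∧
  (∀ u : ℝ → Rd d → Vec N, (∀ ε : ℝ, 0 < ε → MemLpOn p Ω (u ε) ∧ AFreeOn A Ω (u ε)) →
    PEquiintegrable p Ω (fun ε : {ε : ℝ // 0 < ε} => u ε.1) →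
    PEquiintegrable p Ω (fun ε : {ε : ℝ // 0 < ε} => E ε.1 (u ε.1)))

/-- An admissible operator: constant rank together with Assumptions 1 and 2. -/
def Admissible {d N M : ℕ} (p : ℝ) (A : Fin d → (Vec N →ₗ[ℝ] Vec M))
    (Ω D0 : Set (Rd d)) : Prop :=
  ConstantRank A ∧ NullAverage p A D0 ∧ ∃ c E, ExtensionProperty p A Ω D0 c E

/-! ## High-contrast convergence -/

/-- High-contrast convergence of a family `u` (with scales `η`) to `v`. -/
def HCTendsto {d N M : ℕ} (p : ℝ) (A : Fin d → (Vec N →ₗ[ℝ] Vec M)) (Ω D0 : Set (Rd d))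
    {ι : Type*} (l : Filter ι) (η : ι → ℝ) (u : ι → Rd d → Vec N) (v : Rd d → Vec N) : Prop :=
  WeakLpTendsto p Ω l (fun k x => η k • u k x) 0 ∧
  ∃ ut : ι → Rd d → Vec N,
    (∀ k, MemLpOn p Ω (ut k) ∧ AFreeOn A Ω (ut k)) ∧
    (∀ k, ∀ᵐ x ∂volume.restrict (stiffPart (η k) Ω D0), u k x = ut k x) ∧
    WeakLpTendsto p Ω l ut v

/-! ## The functionals -/

def U1 {d N M : ℕ} (p : ℝ) (A : Fin d → (Vec N →ₗ[ℝ] Vec M)) (Ω : Set (Rd d)) :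
    Set (Rd d → Vec N) :=
  {u | MemLpOn p Ω u ∧ AFreeOn A Ω u}

def U0 {d N M : ℕ} (p : ℝ) (A : Fin d → (Vec N →ₗ[ℝ] Vec M)) (Ω D0 Ω' : Set (Rd d)) :
    Set (Rd d → Rd d → Vec N) :=
  {u | MemLpProd p Ω u ∧ (∀ x, Zper (u x)) ∧
    (∀ x, ∀ᵐ y ∂volume.restrict (Qcube d \ D0), u x y = 0) ∧
    (∀ᵐ x ∂volume.restrict Ω', AFreeTorus A (u x))}

/-- The constant `α₀`. -/
def alpha0 {d N M : ℕ} (p : ℝ) (A : Fin d → (Vec N →ₗ[ℝ] Vec M)) (Ω D0 : Set (Rd d))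
    (f0lim : Vec N → ℝ) : ℝ :=
  sSup {c : ℝ | ∃ Ω' : Set (Rd d), CpctIn Ω' Ω ∧
    c = sInf {e : ℝ | ∃ u ∈ U0 p A Ω D0 Ω', e = ∫ x in Ω', ∫ y in D0, f0lim (u x y)}}

/-- The `ℤ^d`-periodization of `D₁ = Q ∖ D₀`. -/
def D1per {d : ℕ} (D0 : Set (Rd d)) : Set (Rd d) :=
  ⋃ z : Fin d → ℤ, tr z '' (Qcube d \ D0)

/-- The homogenized stiff energy density `f_hom`. -/
def fhom {d N M : ℕ} (p : ℝ) (A : Fin d → (Vec N →ₗ[ℝ] Vec M)) (D0 : Set (Rd d))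
    (f1 : Rd d → Vec N → ℝ) (ξ : Vec N) : ℝ :=
  liminf (fun k : ℕ =>
    sInf {c : ℝ | ∃ v : Rd d → Vec N,
      MemLp v (ENNReal.ofReal p) (volume.restrict (Qcube d)) ∧ Zper v ∧
      (∫ y in Qcube d, v y) = 0 ∧ AFreeTorus A v ∧
      c = ∫ y in Qcube d ∩ {y | (k : ℝ) • y ∈ D1per D0}, f1 ((k : ℝ) • y) (ξ + v y)}) atTop

/-- The high-contrast energy `F_ε`. -/
def Feps {d N M : ℕ} (p : ℝ) (A : Fin d → (Vec N →ₗ[ℝ] Vec M)) (Ω D0 : Set (Rd d))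
    (f0 : ℝ → Vec N → ℝ) (f1 : Rd d → Vec N → ℝ) (ε : ℝ) (u : Rd d → Vec N) : EReal :=
  if u ∈ U1 p A Ω then
    (((∫ x in softPart ε Ω D0, f0 ε (ε • u x)) +
      ∫ x in stiffPart ε Ω D0, f1 (ε⁻¹ • x) (u x) : ℝ) : EReal)
  else ⊤

/-- The soft energy `F_{0,ε}`. -/
def F0eps {d N M : ℕ} (p : ℝ) (A : Fin d → (Vec N →ₗ[ℝ] Vec M)) (Ω D0 : Set (Rd d))
    (f0 : ℝ → Vec N → ℝ) (ε : ℝ) (u : Rd d → Vec N) : EReal :=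
  if u ∈ U1 p A Ω then ((∫ x in softPart ε Ω D0, f0 ε (ε • u x) : ℝ) : EReal) else ⊤

/-- The stiff energy `F_{1,ε}`. -/
def F1eps {d N M : ℕ} (p : ℝ) (A : Fin d → (Vec N →ₗ[ℝ] Vec M)) (Ω D0 : Set (Rd d))
    (f1 : Rd d → Vec N → ℝ) (ε : ℝ) (u : Rd d → Vec N) : EReal :=
  if u ∈ U1 p A Ω then ((∫ x in stiffPart ε Ω D0, f1 (ε⁻¹ • x) (u x) : ℝ) : EReal) else ⊤

/-- The limiting functional `F = α₀ + ∫_Ω f_hom(u)`. -/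
def Flim {d N M : ℕ} (p : ℝ) (A : Fin d → (Vec N →ₗ[ℝ] Vec M)) (Ω D0 : Set (Rd d))
    (f0lim : Vec N → ℝ) (f1 : Rd d → Vec N → ℝ) (u : Rd d → Vec N) : EReal :=
  if u ∈ U1 p A Ω then
    ((alpha0 p A Ω D0 f0lim + ∫ x in Ω, fhom p A D0 f1 (u x) : ℝ) : EReal)
  else ⊤

/-- The limiting soft functional `F₀`. -/
def F0lim {d N M : ℕ} (p : ℝ) (A : Fin d → (Vec N →ₗ[ℝ] Vec M)) (Ω D0 : Set (Rd d))
    (f0lim : Vec N → ℝ) (u : Rd d → Vec N) : EReal :=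
  if u =ᵐ[volume.restrict Ω] (0 : Rd d → Vec N) then ((alpha0 p A Ω D0 f0lim : ℝ) : EReal)
  else ⊤

/-- The limiting stiff functional `F₁`. -/
def F1lim {d N M : ℕ} (p : ℝ) (A : Fin d → (Vec N →ₗ[ℝ] Vec M)) (Ω D0 : Set (Rd d))
    (f1 : Rd d → Vec N → ℝ) (u : Rd d → Vec N) : EReal :=
  if u ∈ U1 p A Ω then ((∫ x in Ω, fhom p A D0 f1 (u x) : ℝ) : EReal) else ⊤

/-! ## Higher-order operators, potentials, Sobolev spaces -/

/-- The pointwise value of the formal adjoint of the `k`-th order homogeneous operator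
with coefficients `A`. -/
def adjOp {d k N M : ℕ} (A : (Fin k → Fin d) → (Vec N →ₗ[ℝ] Vec M)) (ψ : Rd d → Vec M)
    (x : Rd d) : Vec N :=
  fun n => (-1 : ℝ) ^ k * ∑ j : Fin k → Fin d,
    dot (A j (Pi.single n 1)) (iteratedFDeriv ℝ k ψ x (fun t => Pi.single (j t) 1))

/-- `𝒜 u = 0` in `W^{-k,p}(O)` for a `k`-th order operator. -/
def AFreeOnK {d k N M : ℕ} (A : (Fin k → Fin d) → (Vec N →ₗ[ℝ] Vec M)) (O : Set (Rd d))
    (u : Rd d → Vec N) : Prop :=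
  ∀ ψ : Rd d → Vec M, TestOn O ψ → ∫ x in O, dot (u x) (adjOp A ψ x) = 0

/-- The symbol of a `k`-th order homogeneous operator. -/
def symbK {d k N M : ℕ} (A : (Fin k → Fin d) → (Vec N →ₗ[ℝ] Vec M)) (ω : Rd d) :
    Vec N →ₗ[ℝ] Vec M :=
  ∑ j : Fin k → Fin d, (∏ t, ω (j t)) • A j

def ConstantRankK {d k N M : ℕ} (A : (Fin k → Fin d) → (Vec N →ₗ[ℝ] Vec M)) : Prop :=
  ∃ r : ℕ, ∀ ω : Rd d, ω ≠ 0 → Module.finrank ℝ (LinearMap.range (symbK A ω)) = r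

/-- `g` is the weak partial derivative `∂_j w` (for the `m`-tuple `j` of directions) on `U`. -/
def IsWeakDerivOn {d m M : ℕ} (U : Set (Rd d)) (j : Fin m → Fin d) (w g : Rd d → Vec M) :
    Prop :=
  ∀ φ : Rd d → ℝ, ContDiff ℝ (⊤ : ℕ∞) φ → HasCompactSupport φ → tsupport φ ⊆ U →
    ∀ cc : Fin M, (∫ x in U, w x cc * iteratedFDeriv ℝ m φ x (fun t => Pi.single (j t) 1))
      = (-1 : ℝ) ^ m * ∫ x in U, g x cc * φ x

/-- Membership in the Sobolev space `W^{ℓ,p}(U; ℝ^M)`. -/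
def MemW {d M : ℕ} (ℓ : ℕ) (p : ℝ) (U : Set (Rd d)) (w : Rd d → Vec M) : Prop :=
  MemLpOn p U w ∧ ∀ m : ℕ, m ≤ ℓ → ∀ j : Fin m → Fin d,
    ∃ g : Rd d → Vec M, MemLpOn p U g ∧ IsWeakDerivOn U j w g

/-- A choice of the weak derivative `∂_j w` on `U` (defaults to `0`). -/
def wDeriv {d m M : ℕ} (p : ℝ) (U : Set (Rd d)) (j : Fin m → Fin d) (w : Rd d → Vec M) :
    Rd d → Vec M :=
  if h : ∃ g : Rd d → Vec M, MemLpOn p U g ∧ IsWeakDerivOn U j w g then h.choose else 0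

/-- The `L^p(U)` norm of the `ℓ`-th order (weak) gradient `∇^ℓ w`. -/
def gradLp {d M : ℕ} (ℓ : ℕ) (p : ℝ) (U : Set (Rd d)) (w : Rd d → Vec M) : ℝ :=
  (eLpNorm (fun x => Real.sqrt (∑ j : Fin ℓ → Fin d, eN (wDeriv p U j w x) ^ 2))
    (ENNReal.ofReal p) (volume.restrict U)).toReal

/-- The action `ℬ w = ∑_{|j|=ℓ} B^{(j)} ∂_j w` of an `ℓ`-th order operator on a Sobolev
function, through its weak derivatives. -/
def opApplyW {d ℓ M N : ℕ} (p : ℝ) (U : Set (Rd d))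
    (B : (Fin ℓ → Fin d) → (Vec M →ₗ[ℝ] Vec N)) (w : Rd d → Vec M) : Rd d → Vec N :=
  fun x => ∑ j : Fin ℓ → Fin d, B j (wDeriv p U j w x)

/-- `U` is an `𝒜`-extension domain (for a `k`-th order operator `𝒜`). -/
def AExtensionDomainK {d k N M : ℕ} (p : ℝ) (A : (Fin k → Fin d) → (Vec N →ₗ[ℝ] Vec M))
    (U : Set (Rd d)) : Prop :=
  ∃ (E : (Rd d → Vec N) → (Rd d → Vec N)) (c : ℝ), 0 < c ∧
    ∀ u : Rd d → Vec N, MemLpOn p U u → AFreeOnK A U u →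
      (∀ᵐ x ∂volume.restrict U, E u x = u x) ∧
      MemLp (E u) (ENNReal.ofReal p) volume ∧
      LpNormOn p Set.univ (E u) ≤ c * LpNormOn p U u ∧
      AFreeOnK A Set.univ (E u)

/-- `U` is an `𝒜`-extension domain (first-order version). -/
def AExtensionDomain1 {d N M : ℕ} (p : ℝ) (A : Fin d → (Vec N →ₗ[ℝ] Vec M))
    (U : Set (Rd d)) : Prop :=
  ∃ (E : (Rd d → Vec N) → (Rd d → Vec N)) (c : ℝ), 0 < c ∧
    ∀ u : Rd d → Vec N, MemLpOn p U u → AFreeOn A U u →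
      (∀ᵐ x ∂volume.restrict U, E u x = u x) ∧
      MemLp (E u) (ENNReal.ofReal p) volume ∧
      LpNormOn p Set.univ (E u) ≤ c * LpNormOn p U u ∧
      AFreeOn A Set.univ (E u)

/-- The `W^{m,q}(ℝ^d)` norm of a smooth function. -/
def WmNorm {d M : ℕ} (m : ℕ) (q : ℝ) (ψ : Rd d → Vec M) : ℝ :=
  ∑ j ∈ Finset.range (m + 1),
    (eLpNorm (fun x => ‖iteratedFDeriv ℝ j ψ x‖) (ENNReal.ofReal q) volume).toReal

/-- The `W^{-m,p}(ℝ^d)` norm of `𝒜 u`, via duality with `W^{m,p'}`. -/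
def negNorm {d k N M : ℕ} (m : ℕ) (p : ℝ) (A : (Fin k → Fin d) → (Vec N →ₗ[ℝ] Vec M))
    (u : Rd d → Vec N) : ℝ :=
  sSup {c : ℝ | ∃ ψ : Rd d → Vec M, ContDiff ℝ (⊤ : ℕ∞) ψ ∧ HasCompactSupport ψ ∧
    WmNorm m (conjExp p) ψ ≤ 1 ∧ c = ∫ x, dot (u x) (adjOp A ψ x)}

/-! ## Fourier-analytic material -/

/-- Fourier transform of a (complexified, vector-valued) function. -/
def ftC {d N : ℕ} (f : Rd d → (Fin N → ℂ)) (ω : Rd d) : Fin N → ℂ :=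
  ∫ x : Rd d, Complex.exp (-(2 * Real.pi * Complex.I) * (∑ i, (x i : ℂ) * (ω i : ℂ))) • f x

/-- Complexification of a real vector-valued map. -/
def cplx {d N : ℕ} (u : Rd d → Vec N) : Rd d → (Fin N → ℂ) := fun x n => ((u x n : ℝ) : ℂ)

/-- Action on `ℂ^N` of (the complexification of) a real linear map on `ℝ^N`. -/
def matC {N : ℕ} (P : Vec N →ₗ[ℝ] Vec N) (v : Fin N → ℂ) : Fin N → ℂ :=
  fun m => ∑ n, ((P (Pi.single n 1) m : ℝ) : ℂ) * v n

end HC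

namespace HC

/-!
Fix a small `s`. Where `|u - v| ≤ s`, the `p`-Lipschitz condition bounds the energy difference
by `s` times an `L¹`-bounded quantity. The exceptional set has small measure by convergence in
measure. On it `f(u)` is bounded below and `f(v)` is at most `Λ(1 + |v|^p)`, whose integral is
small by equiintegrability of `v`. Discarding `f(u)` there is why only the lower bound on the
`liminf` survives.
-/

section GrowthIntegrand

variable {α E ι : Type*} [MeasurableSpace α] {μ : Measure α} [NormedAddCommGroup E]
  {p Λ L : ℝ}

lemma rpow_sub_one_le_one_add_rpow (hp : 1 ≤ p) {t : ℝ} (ht : 0 ≤ t) :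
    t ^ (p - 1) ≤ 1 + t ^ p := by
  rcases le_total t 1 with h | h
  · linarith [Real.rpow_le_one ht h (sub_nonneg.2 hp), Real.rpow_nonneg ht p]
  · linarith [Real.rpow_le_rpow_of_exponent_le h (sub_le_self p zero_le_one)]

lemma integrable_norm_rpow_of_memLp (hp : 0 ≤ p) {u : α → E} (hu : MemLp u (ENNReal.ofReal p) μ)
    [IsFiniteMeasure μ] : Integrable (fun x => ‖u x‖ ^ p) μ := by
  simpa only [ENNReal.toReal_ofReal hp] using hu.integrable_norm_rpow'

lemma eLpNorm_le_ofReal_iff (hp : 0 < p) {u : α → E} (hu : MemLp u (ENNReal.ofReal p) μ)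
    {C : ℝ} (hC : 0 ≤ C) :
    eLpNorm u (ENNReal.ofReal p) μ ≤ ENNReal.ofReal C ↔ ∫ x, ‖u x‖ ^ p ∂μ ≤ C ^ p := by
  have hint : 0 ≤ ∫ x, ‖u x‖ ^ p ∂μ := by positivity
  rw [hu.eLpNorm_eq_integral_rpow_norm (by simpa using hp) ENNReal.ofReal_ne_top,
    ENNReal.toReal_ofReal hp.le, ENNReal.ofReal_le_ofReal_iff hC,
    Real.rpow_inv_le_iff_of_pos hint hC hp]

lemma integral_const_add_eq [IsFiniteMeasure μ] {g : α → ℝ} (hg : Integrable g μ) (c : ℝ) :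
    ∫ x, (c + g x) ∂μ = c * μ.real univ + ∫ x, g x ∂μ := by
  rw [integral_add (integrable_const c) hg, integral_const, smul_eq_mul, mul_comm]

lemma exists_forall_setIntegral_two_add_norm_rpow_le [IsFiniteMeasure μ] (hp : 0 < p)
    {v : ι → α → E} (hv : UniformIntegrable v (ENNReal.ofReal p) μ) {η : ℝ} (hη : 0 < η) :
    ∃ m : ℝ, 0 < m ∧ ∀ i B, MeasurableSet B → μ B ≤ ENNReal.ofReal m →
      ∫ x in B, (2 + ‖v i x‖ ^ p) ∂μ ≤ η := by
  obtain ⟨m, hm, hmB⟩ := hv.unifIntegrable (show 0 < (η / 2) ^ p⁻¹ by positivity)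
  refine ⟨min m (η / 4), by positivity, fun i B hB hμB => ?_⟩
  have hvi := (hv.memLp i).restrict B
  have hnorm : ∫ x in B, ‖v i x‖ ^ p ∂μ ≤ η / 2 := by
    have := hmB i B hB (hμB.trans (ENNReal.ofReal_le_ofReal (min_le_left _ _)))
    rwa [eLpNorm_indicator_eq_eLpNorm_restrict hB, eLpNorm_le_ofReal_iff hp hvi (by positivity),
      Real.rpow_inv_rpow (by positivity) hp.ne'] at this
  have hreal : μ.real B ≤ η / 4 := ENNReal.toReal_le_of_le_ofReal (by positivity)
    (hμB.trans (ENNReal.ofReal_le_ofReal (min_le_right _ _)))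
  rw [integral_const_add_eq (integrable_norm_rpow_of_memLp hp.le hvi),
    measureReal_restrict_apply_univ]
  linarith

lemma eventually_exists_measurableSet_forall_norm_le {l : Filter ι} {w : ι → α → E}
    (hw : TendstoInMeasure μ w l 0) {s m : ℝ} (hs : 0 < s) (hm : 0 < m) :
    ∀ᶠ i in l, ∃ B, MeasurableSet B ∧ μ B ≤ ENNReal.ofReal m ∧ ∀ x ∉ B, ‖w i x‖ ≤ s := by
  have hsmall := (tendstoInMeasure_iff_norm.1 hw s hs).eventually
    (gt_mem_nhds (ENNReal.ofReal_pos.2 hm))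
  filter_upwards [hsmall] with i hi
  refine ⟨toMeasurable μ _, measurableSet_toMeasurable _ _, (measure_toMeasurable _).trans_le hi.le,
    fun x hx => ?_⟩
  have hlt : ¬ s ≤ ‖w i x - (0 : α → E) x‖ := fun h =>
    hx (subset_toMeasurable μ {y | s ≤ ‖w i y - (0 : α → E) y‖} h)
  simpa using (not_le.1 hlt).le

/-- Carathéodory integrands that are bounded below, have `p`-growth from above and are
`p`-Lipschitz: hypotheses H1, H3 and H4 for a single density. Coercivity is relaxed to
the lower bound `-Λ`, and the same constant `Λ` serves both bounds. -/
structure IsGrowthIntegrand (p Λ L : ℝ) (f : α → E → ℝ) : Prop where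
  measurable : ∀ ξ, Measurable fun x => f x ξ
  continuous : ∀ x, Continuous (f x)
  neg_le : ∀ x ξ, -Λ ≤ f x ξ
  le : ∀ x ξ, f x ξ ≤ Λ * (1 + ‖ξ‖ ^ p)
  abs_sub_le : ∀ x ξ ζ, |f x ξ - f x ζ| ≤ L * (1 + ‖ξ‖ ^ (p - 1) + ‖ζ‖ ^ (p - 1)) * ‖ξ - ζ‖

namespace IsGrowthIntegrand

variable {f : α → E → ℝ} {ξ ζ : E}

lemma neg_le_sub (hf : IsGrowthIntegrand p Λ L f) (x : α) :
    -(Λ * (2 + ‖ζ‖ ^ p)) ≤ f x ξ - f x ζ := by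
  linarith [hf.neg_le x ξ, hf.le x ζ]

lemma abs_sub_le_of_norm_sub_le (hf : IsGrowthIntegrand p Λ L f) (hp : 1 ≤ p) (hL : 0 ≤ L)
    (x : α) {s : ℝ} (hs : ‖ξ - ζ‖ ≤ s) :
    |f x ξ - f x ζ| ≤ L * s * (3 + ‖ξ‖ ^ p + ‖ζ‖ ^ p) :=
  calc |f x ξ - f x ζ| ≤ L * (1 + ‖ξ‖ ^ (p - 1) + ‖ζ‖ ^ (p - 1)) * ‖ξ - ζ‖ := hf.abs_sub_le x ξ ζ
    _ ≤ L * (1 + (1 + ‖ξ‖ ^ p) + (1 + ‖ζ‖ ^ p)) * s := by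
      gcongr <;> exact rpow_sub_one_le_one_add_rpow hp (norm_nonneg _)
    _ = L * s * (3 + ‖ξ‖ ^ p + ‖ζ‖ ^ p) := by ring

lemma neg_add_indicator_le_sub (hf : IsGrowthIntegrand p Λ L f) (hp : 1 ≤ p) (hL : 0 ≤ L)
    {u v : α → E} {s : ℝ} (hs : 0 ≤ s) {B : Set α} (huv : ∀ x ∉ B, ‖u x - v x‖ ≤ s) (x : α) :
    -(L * s * (3 + ‖u x‖ ^ p + ‖v x‖ ^ p) + B.indicator (fun y => Λ * (2 + ‖v y‖ ^ p)) x) ≤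
      f x (u x) - f x (v x) := by
  by_cases hx : x ∈ B
  · have hgood : 0 ≤ L * s * (3 + ‖u x‖ ^ p + ‖v x‖ ^ p) := by positivity
    rw [indicator_of_mem hx]
    linarith [hf.neg_le_sub (ξ := u x) (ζ := v x) x]
  · rw [indicator_of_notMem hx, add_zero]
    exact neg_le_of_abs_le (hf.abs_sub_le_of_norm_sub_le hp hL x (huv x hx))

variable [MeasurableSpace E] [BorelSpace E] [SecondCountableTopology E] {u v : α → E}

lemma aestronglyMeasurable_comp (hf : IsGrowthIntegrand p Λ L f) (hu : AEStronglyMeasurable u μ) :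
    AEStronglyMeasurable (fun x => f x (u x)) μ :=
  have hjoint : Measurable fun q : E × α => f q.2 q.1 :=
    measurable_uncurry_of_continuous_of_measurable hf.continuous hf.measurable
  (hjoint.comp_aemeasurable (hu.aemeasurable.prodMk aemeasurable_id)).aestronglyMeasurable

lemma integrable_comp [IsFiniteMeasure μ] (hf : IsGrowthIntegrand p Λ L f) (hp : 0 ≤ p)
    (hΛ : 0 ≤ Λ) (hu : MemLp u (ENNReal.ofReal p) μ) : Integrable (fun x => f x (u x)) μ := by
  have hbound : Integrable (fun x => Λ * (1 + ‖u x‖ ^ p)) μ :=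
    ((integrable_const 1).add (integrable_norm_rpow_of_memLp hp hu)).const_mul Λ
  refine hbound.mono' (hf.aestronglyMeasurable_comp hu.1) (ae_of_all _ fun x => ?_)
  have : 0 ≤ Λ * ‖u x‖ ^ p := by positivity
  exact abs_le.2 ⟨by linarith [hf.neg_le x (u x)], hf.le x (u x)⟩

lemma neg_le_setIntegral_sub [IsFiniteMeasure μ] (hf : IsGrowthIntegrand p Λ L f) (hp : 1 ≤ p)
    (hΛ : 0 ≤ Λ) (hL : 0 ≤ L) (hu : MemLp u (ENNReal.ofReal p) μ)
    (hv : MemLp v (ENNReal.ofReal p) μ) {s : ℝ} (hs : 0 ≤ s) {S B : Set α}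
    (hB : MeasurableSet B) (huv : ∀ x ∉ B, ‖u x - v x‖ ≤ s) :
    -(L * s * (3 * μ.real univ + ∫ x, ‖u x‖ ^ p ∂μ + ∫ x, ‖v x‖ ^ p ∂μ)
        + Λ * ∫ x in B, (2 + ‖v x‖ ^ p) ∂μ) ≤
      ∫ x in S, (f x (u x) - f x (v x)) ∂μ := by
  have hp0 : 0 ≤ p := zero_le_one.trans hp
  have iu := integrable_norm_rpow_of_memLp hp0 hu
  have iv := integrable_norm_rpow_of_memLp hp0 hv
  let good : α → ℝ := fun x => L * s * (3 + ‖u x‖ ^ p + ‖v x‖ ^ p)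
  let bad : α → ℝ := B.indicator fun x => Λ * (2 + ‖v x‖ ^ p)
  have igood : Integrable good μ := (((integrable_const 3).add iu).add iv).const_mul _
  have ibad : Integrable bad μ := (((integrable_const 2).add iv).const_mul Λ).indicator hB
  have hnonneg (x : α) : 0 ≤ good x + bad x :=
    add_nonneg (by positivity) (indicator_nonneg (fun y _ => by positivity) x)
  calc -(L * s * (3 * μ.real univ + ∫ x, ‖u x‖ ^ p ∂μ + ∫ x, ‖v x‖ ^ p ∂μ)
        + Λ * ∫ x in B, (2 + ‖v x‖ ^ p) ∂μ)
      = -∫ x, (good x + bad x) ∂μ := by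
        rw [integral_add igood ibad, integral_indicator hB, integral_const_mul, integral_const_mul,
          integral_add (f := fun x => 3 + ‖u x‖ ^ p) ((integrable_const 3).add iu) iv,
          integral_const_add_eq iu]
    _ ≤ -∫ x in S, (good x + bad x) ∂μ :=
        neg_le_neg (setIntegral_le_integral (igood.add ibad) (ae_of_all _ hnonneg))
    _ = ∫ x in S, -(good x + bad x) ∂μ := (integral_neg _).symm
    _ ≤ ∫ x in S, (f x (u x) - f x (v x)) ∂μ :=
        integral_mono (igood.add ibad).integrableOn.neg
          ((hf.integrable_comp hp0 hΛ hu).sub (hf.integrable_comp hp0 hΛ hv)).integrableOn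
          (hf.neg_add_indicator_le_sub hp hL hs huv)

lemma setIntegral_sub_le [IsFiniteMeasure μ] (hf : IsGrowthIntegrand p Λ L f) (hp : 0 ≤ p)
    (hΛ : 0 ≤ Λ) (hu : MemLp u (ENNReal.ofReal p) μ) (hv : MemLp v (ENNReal.ofReal p) μ)
    (S : Set α) :
    ∫ x in S, (f x (u x) - f x (v x)) ∂μ ≤ Λ * (2 * μ.real univ + ∫ x, ‖u x‖ ^ p ∂μ) := by
  have iu := integrable_norm_rpow_of_memLp hp hu
  have ibound : Integrable (fun x => Λ * (2 + ‖u x‖ ^ p)) μ :=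
    ((integrable_const 2).add iu).const_mul Λ
  calc ∫ x in S, (f x (u x) - f x (v x)) ∂μ
      ≤ ∫ x in S, Λ * (2 + ‖u x‖ ^ p) ∂μ :=
        integral_mono ((hf.integrable_comp hp hΛ hu).sub (hf.integrable_comp hp hΛ hv)).integrableOn
          ibound.integrableOn fun x => by linarith [hf.neg_le_sub (ξ := v x) (ζ := u x) x]
    _ ≤ ∫ x, Λ * (2 + ‖u x‖ ^ p) ∂μ :=
        setIntegral_le_integral ibound (ae_of_all _ fun x => by positivity)
    _ = Λ * (2 * μ.real univ + ∫ x, ‖u x‖ ^ p ∂μ) := by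
        rw [integral_const_mul, integral_const_add_eq iu]

variable {l : Filter ι} {F : ι → α → E → ℝ} {U V : ι → α → E} {C : ℝ≥0}

lemma eventually_neg_le_setIntegral_sub [IsFiniteMeasure μ] (hp : 1 ≤ p) (hΛ : 0 ≤ Λ) (hL : 0 ≤ L)
    (hF : ∀ i, IsGrowthIntegrand p Λ L (F i)) (S : ι → Set α)
    (hU : ∀ i, MemLp (U i) (ENNReal.ofReal p) μ)
    (hUC : ∀ i, eLpNorm (U i) (ENNReal.ofReal p) μ ≤ C)
    (hV : UniformIntegrable V (ENNReal.ofReal p) μ)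
    (hUV : TendstoInMeasure μ (fun i x => U i x - V i x) l 0) {δ : ℝ} (hδ : 0 < δ) :
    ∀ᶠ i in l, -δ ≤ ∫ x in S i, (F i x (U i x) - F i x (V i x)) ∂μ := by
  have hp0 : 0 < p := zero_lt_one.trans_le hp
  obtain ⟨D, hVD⟩ := hV.2.2
  obtain ⟨s, hs, hsδ⟩ :=
    exists_pos_mul_lt (half_pos hδ) (L * (3 * μ.real univ + (C : ℝ) ^ p + (D : ℝ) ^ p))
  obtain ⟨η, hη, hηδ⟩ := exists_pos_mul_lt (half_pos hδ) Λ
  obtain ⟨m, hm, hmB⟩ := exists_forall_setIntegral_two_add_norm_rpow_le hp0 hV hη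
  filter_upwards [eventually_exists_measurableSet_forall_norm_le hUV hs hm]
    with i ⟨B, hB, hμB, hclose⟩
  have hUi : ∫ x, ‖U i x‖ ^ p ∂μ ≤ (C : ℝ) ^ p :=
    (eLpNorm_le_ofReal_iff hp0 (hU i) C.coe_nonneg).1 (by simpa using hUC i)
  have hVi : ∫ x, ‖V i x‖ ^ p ∂μ ≤ (D : ℝ) ^ p :=
    (eLpNorm_le_ofReal_iff hp0 (hV.memLp i) D.coe_nonneg).1 (by simpa using hVD i)
  have hgood : L * s * (3 * μ.real univ + ∫ x, ‖U i x‖ ^ p ∂μ + ∫ x, ‖V i x‖ ^ p ∂μ) ≤ δ / 2 :=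
    calc _ ≤ L * s * (3 * μ.real univ + (C : ℝ) ^ p + (D : ℝ) ^ p) := by gcongr
      _ ≤ δ / 2 := by linarith
  have hbad : Λ * ∫ x in B, (2 + ‖V i x‖ ^ p) ∂μ ≤ δ / 2 :=
    (mul_le_mul_of_nonneg_left (hmB i B hB hμB) hΛ).trans hηδ.le
  linarith [(hF i).neg_le_setIntegral_sub hp hΛ hL (hU i) (hV.memLp i) hs.le hB hclose (S := S i)]

theorem liminf_setIntegral_sub_nonneg [IsFiniteMeasure μ] [l.NeBot] (hp : 1 ≤ p) (hΛ : 0 ≤ Λ)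
    (hL : 0 ≤ L) (hF : ∀ i, IsGrowthIntegrand p Λ L (F i)) (S : ι → Set α)
    (hU : ∀ i, MemLp (U i) (ENNReal.ofReal p) μ)
    (hUC : ∀ i, eLpNorm (U i) (ENNReal.ofReal p) μ ≤ C)
    (hV : UniformIntegrable V (ENNReal.ofReal p) μ)
    (hUV : TendstoInMeasure μ (fun i x => U i x - V i x) l 0) :
    0 ≤ liminf (fun i => ∫ x in S i, (F i x (U i x) - F i x (V i x)) ∂μ) l := by
  have hp0 : 0 < p := zero_lt_one.trans_le hp
  have hbdd : l.IsBoundedUnder (· ≤ ·)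
      fun i => ∫ x in S i, (F i x (U i x) - F i x (V i x)) ∂μ := by
    refine isBoundedUnder_of ⟨Λ * (2 * μ.real univ + (C : ℝ) ^ p), fun i => ?_⟩
    refine ((hF i).setIntegral_sub_le hp0.le hΛ (hU i) (hV.memLp i) (S i)).trans ?_
    gcongr
    exact (eLpNorm_le_ofReal_iff hp0 (hU i) C.coe_nonneg).1 (by simpa using hUC i)
  refine le_of_forall_lt_imp_le_of_dense fun c hc =>
    le_liminf_of_le hbdd.isCoboundedUnder_ge ?_
  simpa using
    eventually_neg_le_setIntegral_sub hp hΛ hL hF S hU hUC hV hUV (neg_pos.2 hc)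

end IsGrowthIntegrand

lemma tendstoInMeasure_comp_lipschitzWith {X Y : Type*} [PseudoEMetricSpace X]
    [PseudoEMetricSpace Y] {K : ℝ≥0} {φ : X → Y} (hφ : LipschitzWith K φ) {l : Filter ι}
    {w : ι → α → X} {w₀ : α → X} (hw : TendstoInMeasure μ w l w₀) :
    TendstoInMeasure μ (fun i x => φ (w i x)) l (fun x => φ (w₀ x)) := by
  refine tendstoInMeasure_of_ne_top fun ε hε _ => ?_
  refine tendsto_of_tendsto_of_tendsto_of_le_of_le tendsto_const_nhds
    (hw (ε / K) (ENNReal.div_pos hε.ne' ENNReal.coe_ne_top)) (fun _ => zero_le)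
    fun i => measure_mono fun x hx => ?_
  exact ENNReal.div_le_of_le_mul' (le_trans hx (hφ _ _))

end GrowthIntegrand

section Euclidean

variable {d N : ℕ} {p Λ L : ℝ} {O : Set (Rd d)}

lemma eN_eq_norm_toLp (ξ : Vec N) : eN ξ = ‖WithLp.toLp 2 ξ‖ := by
  simp [eN, EuclideanSpace.norm_eq]

lemma memLp_toLp {u : Rd d → Vec N} (hu : MemLpOn p O u) :
    MemLp (fun x => WithLp.toLp 2 (u x)) (ENNReal.ofReal p) (volume.restrict O) :=
  (EuclideanSpace.equiv (Fin N) ℝ).symm.toContinuousLinearMap.comp_memLp' hu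

lemma eLpNorm_toLp_le {u : Rd d → Vec N} (hu : MemLpOn p O u) {C : ℝ} (hC : LpNormOn p O u ≤ C) :
    eLpNorm (fun x => WithLp.toLp 2 (u x)) (ENNReal.ofReal p) (volume.restrict O)
      ≤ C.toNNReal := by
  have hnorm : LpNormOn p O u = (eLpNorm (fun x => WithLp.toLp 2 (u x)) (ENNReal.ofReal p)
      (volume.restrict O)).toReal := by
    simp only [LpNormOn, eN_eq_norm_toLp, eLpNorm_norm]
  rw [← ENNReal.ofReal_toReal (memLp_toLp hu).eLpNorm_ne_top, ← hnorm]
  exact ENNReal.ofReal_le_ofReal hC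

lemma unifIntegrable_toLp {ι : Type*} (hp : 0 < p) (hO : MeasurableSet O) {v : ι → Rd d → Vec N}
    (hmem : ∀ i, MemLpOn p O (v i)) (hv : PEquiintegrable p O v) :
    UnifIntegrable (fun i x => WithLp.toLp 2 (v i x)) (ENNReal.ofReal p)
      (volume.restrict O) := by
  intro η hη
  obtain ⟨m, hm, hmE⟩ := hv (η ^ p) (by positivity)
  refine ⟨m / 2, half_pos hm, fun i B hB hOB => ?_⟩
  rw [Measure.restrict_apply hB] at hOB
  have hsmall : volume (B ∩ O) < ENNReal.ofReal m :=
    hOB.trans_lt ((ENNReal.ofReal_lt_ofReal_iff hm).2 (half_lt_self hm))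
  rw [eLpNorm_indicator_eq_eLpNorm_restrict hB,
    eLpNorm_le_ofReal_iff hp ((memLp_toLp (hmem i)).restrict B) hη.le,
    Measure.restrict_restrict hB]
  simpa only [eN_eq_norm_toLp] using (hmE i _ (hB.inter hO) inter_subset_right hsmall).le

lemma uniformIntegrable_toLp {ι : Type*} (hp : 0 < p) (hO : MeasurableSet O)
    {v : ι → Rd d → Vec N} {C : ℝ} (hbdd : ∀ i, MemLpOn p O (v i) ∧ LpNormOn p O (v i) ≤ C)
    (hv : PEquiintegrable p O v) :
    UniformIntegrable (fun i x => WithLp.toLp 2 (v i x)) (ENNReal.ofReal p)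
      (volume.restrict O) :=
  ⟨fun i => (memLp_toLp (hbdd i).1).1, unifIntegrable_toLp hp hO (fun i => (hbdd i).1) hv,
    C.toNNReal, fun i => eLpNorm_toLp_le (hbdd i).1 (hbdd i).2⟩

lemma tendstoInMeasure_toLp_sub {ι : Type*} {l : Filter ι} {u v : ι → Rd d → Vec N}
    (huv : TendstoInMeasure (volume.restrict O) (fun i x => u i x - v i x) l 0) :
    TendstoInMeasure (volume.restrict O)
      (fun i x => WithLp.toLp 2 (u i x) - WithLp.toLp 2 (v i x)) l 0 :=
  tendstoInMeasure_comp_lipschitzWith (PiLp.lipschitzWith_toLp 2 fun _ : Fin N => ℝ) huv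

lemma isGrowthIntegrand_ofLp {α : Type*} [MeasurableSpace α] {f : α → Vec N → ℝ}
    (hmeas : ∀ ξ, Measurable fun x => f x ξ) (hcont : ∀ x, Continuous (f x))
    (hbound : ∀ x ξ, -Λ ≤ f x ξ ∧ f x ξ ≤ Λ * (1 + eN ξ ^ p))
    (hlip : ∀ x ξ ζ, |f x ξ - f x ζ| ≤ L * (1 + eN ξ ^ (p - 1) + eN ζ ^ (p - 1)) * eN (ξ - ζ)) :
    IsGrowthIntegrand p Λ L fun x (ξ : EuclideanSpace ℝ (Fin N)) => f x ξ.ofLp where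
  measurable ξ := hmeas ξ.ofLp
  continuous x := (hcont x).comp (PiLp.continuous_ofLp 2 _)
  neg_le x ξ := (hbound x ξ.ofLp).1
  le x ξ := by simpa only [eN_eq_norm_toLp] using (hbound x ξ.ofLp).2
  abs_sub_le x ξ ζ := by
    simpa only [eN_eq_norm_toLp, WithLp.toLp_sub, WithLp.toLp_ofLp] using hlip x ξ.ofLp ζ.ofLp

lemma isGrowthIntegrand_soft {f0 : ℝ → Vec N → ℝ} (h1 : H1soft f0)
    (hbound : ∀ ε, 0 < ε → ∀ ξ, -Λ ≤ f0 ε ξ ∧ f0 ε ξ ≤ Λ * (1 + eN ξ ^ p)) (h4 : H4soft p L f0)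
    {ε : ℝ} (hε : 0 < ε) :
    IsGrowthIntegrand p Λ L fun (_ : Rd d) (ξ : EuclideanSpace ℝ (Fin N)) => f0 ε ξ.ofLp :=
  isGrowthIntegrand_ofLp (fun _ => measurable_const) (fun _ => h1 ε hε) (fun _ => hbound ε hε)
    (fun _ => h4.2 ε hε)

lemma isGrowthIntegrand_stiff {f1 : Rd d → Vec N → ℝ} (h1 : H1stiff f1)
    (hbound : ∀ x ξ, -Λ ≤ f1 x ξ ∧ f1 x ξ ≤ Λ * (1 + eN ξ ^ p)) (h4 : H4stiff p L f1) (ε : ℝ) :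
    IsGrowthIntegrand p Λ L fun x (ξ : EuclideanSpace ℝ (Fin N)) => f1 (ε⁻¹ • x) ξ.ofLp :=
  isGrowthIntegrand_ofLp (fun ξ => (h1.1 ξ).comp (measurable_const_smul ε⁻¹)) (fun _ => h1.2 _)
    (fun _ => hbound _) (fun _ => h4.2 _)

theorem liminf_setIntegral_sub_nonneg (hp : 1 ≤ p) (hΛ : 0 ≤ Λ) (hL : 0 ≤ L)
    (hO : MeasurableSet O) (hO_top : volume O ≠ ⊤) {S : ℝ → Set (Rd d)} (hSO : ∀ ε, S ε ⊆ O)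
    {f : ℝ → Rd d → Vec N → ℝ}
    (hf : ∀ ε, 0 < ε → IsGrowthIntegrand p Λ L
      fun x (ξ : EuclideanSpace ℝ (Fin N)) => f ε x ξ.ofLp)
    {u v : ℝ → Rd d → Vec N}
    (hubd : ∃ C : ℝ, ∀ ε : ℝ, 0 < ε → MemLpOn p O (u ε) ∧ LpNormOn p O (u ε) ≤ C)
    (hvbd : ∃ C : ℝ, ∀ ε : ℝ, 0 < ε → MemLpOn p O (v ε) ∧ LpNormOn p O (v ε) ≤ C)
    (hmeas : TendstoInMeasure (volume.restrict O) (fun ε x => u ε x - v ε x) (𝓝[>] (0 : ℝ)) 0)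
    (hequi : PEquiintegrable p O (fun ε : {ε : ℝ // 0 < ε} => v ε.1)) :
    0 ≤ liminf (fun ε => ∫ x in S ε, (f ε x (u ε x) - f ε x (v ε x))) (𝓝[>] (0 : ℝ)) := by
  obtain ⟨C, hC⟩ := hubd
  obtain ⟨D, hD⟩ := hvbd
  have : IsFiniteMeasure (volume.restrict O) := isFiniteMeasure_restrict.2 hO_top
  have hrestrict (ε : ℝ) : volume.restrict (S ε) = (volume.restrict O).restrict (S ε) :=
    (Measure.restrict_restrict_of_subset (hSO ε)).symm
  have hcoe : Tendsto ((↑) : Ioi (0 : ℝ) → ℝ) atBot (𝓝[>] 0) := (map_coe_Ioi_atBot (0 : ℝ)).le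
  simp only [hrestrict]
  rw [← map_coe_Ioi_atBot (0 : ℝ), ← liminf_comp]
  exact IsGrowthIntegrand.liminf_setIntegral_sub_nonneg hp hΛ hL
    (fun ε : Ioi (0 : ℝ) => hf ε ε.2) (fun ε => S ε) (fun ε => memLp_toLp (hC ε ε.2).1)
    (fun ε => eLpNorm_toLp_le (hC ε ε.2).1 (hC ε ε.2).2)
    (uniformIntegrable_toLp (zero_lt_one.trans_le hp) hO (fun ε : Ioi (0 : ℝ) => hD ε ε.2) hequi)
    (tendstoInMeasure_toLp_sub (hmeas.comp hcoe))

end Euclidean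

lemma neg_le_and_le_of_coercive {a lam Lam t y : ℝ} (ha : 0 ≤ a) (hlam : 0 ≤ lam) (ht : 0 ≤ t)
    (hy : lam * (-a + t) ≤ y ∧ y ≤ Lam * (1 + t)) (hLam : 0 ≤ Lam) :
    -(lam * a + Lam) ≤ y ∧ y ≤ (lam * a + Lam) * (1 + t) := by
  have hlamt : 0 ≤ lam * t := by positivity
  have hextra : 0 ≤ lam * a * (1 + t) := by positivity
  exact ⟨by linarith, by linarith⟩

lemma softPart_subset {d : ℕ} (ε : ℝ) (Ω D0 : Set (Rd d)) : softPart ε Ω D0 ⊆ Ω :=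
  iUnion₂_subset fun _ hz => hz

theorem substitution_lemma_general {d N : ℕ} {p Lam mu : ℝ} (hp : 1 ≤ p) (hLam : 0 ≤ Lam)
    {Ω : Set (Rd d)} (hΩ : MeasurableSet Ω) (hΩ_top : volume Ω ≠ ⊤) (D0 : Set (Rd d))
    {f0 : ℝ → Vec N → ℝ} {f1 : Rd d → Vec N → ℝ} (h1 : H1soft f0 ∧ H1stiff f1)
    (h3 : (∀ ε, 0 < ε → ∀ ξ, -Lam ≤ f0 ε ξ ∧ f0 ε ξ ≤ Lam * (1 + eN ξ ^ p)) ∧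
      ∀ x ξ, -Lam ≤ f1 x ξ ∧ f1 x ξ ≤ Lam * (1 + eN ξ ^ p))
    (h4 : H4soft p mu f0 ∧ H4stiff p mu f1) {u v : ℝ → Rd d → Vec N}
    (hubd : ∃ C : ℝ, ∀ ε : ℝ, 0 < ε → MemLpOn p Ω (u ε) ∧ LpNormOn p Ω (u ε) ≤ C)
    (hvbd : ∃ C : ℝ, ∀ ε : ℝ, 0 < ε → MemLpOn p Ω (v ε) ∧ LpNormOn p Ω (v ε) ≤ C)
    (hmeas : TendstoInMeasure (volume.restrict Ω) (fun ε x => u ε x - v ε x) (𝓝[>] (0 : ℝ)) 0)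
    (hequi : PEquiintegrable p Ω (fun ε : {ε : ℝ // 0 < ε} => v ε.1)) :
    (0 : ℝ) ≤ liminf (fun ε => ∫ x in softPart ε Ω D0, (f0 ε (u ε x) - f0 ε (v ε x)))
        (𝓝[>] (0 : ℝ)) ∧
    (0 : ℝ) ≤ liminf
        (fun ε => ∫ x in stiffPart ε Ω D0, (f1 (ε⁻¹ • x) (u ε x) - f1 (ε⁻¹ • x) (v ε x)))
        (𝓝[>] (0 : ℝ)) :=
  ⟨liminf_setIntegral_sub_nonneg hp hLam h4.1.1.le hΩ hΩ_top (fun ε => softPart_subset ε Ω D0)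
      (fun _ hε => isGrowthIntegrand_soft h1.1 h3.1 h4.1 hε) hubd hvbd hmeas hequi,
    liminf_setIntegral_sub_nonneg hp hLam h4.1.1.le hΩ hΩ_top (fun _ => sdiff_subset)
      (fun ε _ => isGrowthIntegrand_stiff h1.2 h3.2 h4.2 ε) hubd hvbd hmeas hequi⟩

/-- substitution lemma.
For bounded families `{u_ε}`, `{v_ε}` with `u_ε − v_ε → 0` in measure and `{v_ε}`
`p`-equiintegrable, the liminf of the energy differences on the soft and stiff parts
is nonnegative. -/
theorem substitution_lemma
    {d N M : ℕ} (p a lam Lam mu : ℝ) (hp : 1 < p)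
    (Ω D0 : Set (Rd d)) (hset : GoodSetting d Ω D0)
    (f0 : ℝ → Vec N → ℝ) (f1 : Rd d → Vec N → ℝ)
    (h1 : H1soft f0 ∧ H1stiff f1)
    (h3 : H3soft p a lam Lam f0 ∧ H3stiff p a lam Lam f1)
    (h4 : H4soft p mu f0 ∧ H4stiff p mu f1)
    (u v : ℝ → Rd d → Vec N)
    (hubd : ∃ C : ℝ, ∀ ε : ℝ, 0 < ε → MemLpOn p Ω (u ε) ∧ LpNormOn p Ω (u ε) ≤ C)
    (hvbd : ∃ C : ℝ, ∀ ε : ℝ, 0 < ε → MemLpOn p Ω (v ε) ∧ LpNormOn p Ω (v ε) ≤ C)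
    (hmeas : TendstoInMeasure (volume.restrict Ω)
      (fun ε x => u ε x - v ε x) (𝓝[>] (0 : ℝ)) 0)
    (hequi : PEquiintegrable p Ω (fun ε : {ε : ℝ // 0 < ε} => v ε.1)) :
    (0 : ℝ) ≤ Filter.liminf
        (fun ε => ∫ x in softPart ε Ω D0, (f0 ε (u ε x) - f0 ε (v ε x)))
        (𝓝[>] (0 : ℝ)) ∧
    (0 : ℝ) ≤ Filter.liminf
        (fun ε => ∫ x in stiffPart ε Ω D0, (f1 (ε⁻¹ • x) (u ε x) - f1 (ε⁻¹ • x) (v ε x)))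
        (𝓝[>] (0 : ℝ)) := by
  obtain ⟨-, hΩ, -, hΩ_bdd, -⟩ := hset
  obtain ⟨⟨ha, hlam, hLam, h3soft⟩, -, -, -, h3stiff⟩ := h3
  have hrpow (ξ : Vec N) : 0 ≤ eN ξ ^ p := Real.rpow_nonneg (Real.sqrt_nonneg _) p
  have hsoft (ε : ℝ) (hε : 0 < ε) (ξ : Vec N) :=
    neg_le_and_le_of_coercive ha.le hlam.le (hrpow ξ) (h3soft ε hε ξ) hLam.le
  have hstiff (x : Rd d) (ξ : Vec N) :=
    neg_le_and_le_of_coercive ha.le hlam.le (hrpow ξ) (h3stiff x ξ) hLam.le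
  exact substitution_lemma_general hp.le (by positivity) hΩ.measurableSet hΩ_bdd.measure_lt_top.ne
    D0 h1 ⟨hsoft, hstiff⟩ h4 hubd hvbd hmeas hequi

end HC
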